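/- Let S ∈ ℝ^{d×d} be symmetric, let σ > 0, let U ∈ ℝ^{d×p} satisfy UᵀU = I_p, let Δ = diag(δ₁,…,δ_p) with δ_j ≥ σ² for all j, let L = diag(l₁,…,l_p) with l_j² = δ_j - σ², let R ∈ ℝ^{p×p} be orthogonal (RᵀR = I_p), and suppose S U = U Δ (the columns of U are eigenvectors of S with eigenvalues δ_j). Define Λ := U L Rᵀ. Then S (ΛΛᵀ + σ²I_d)⁻¹ Λ = Λ; i.e., Λ = U(Δ - σ²I)^{1/2}Rᵀ satisfies the stationarity equation of the PPCA log-likelihood. -/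

import Mathlib

/-!
Put `M = ΛΛᵀ + σ²I` and `Δ = diag(δ)`. Orthogonality of `R` and of the columns of `U` gives
`M U = U (L² + σ²I) = U Δ = S U`. Both `M` (positive definite) and `Δ` (entries at least `σ² > 0`)
are invertible, so `M⁻¹ U = U Δ⁻¹` and `S M⁻¹ U = U Δ Δ⁻¹ = U`. Multiplying on the right by `L Rᵀ`
yields the claim.
-/

open Matrix

/-- **The PPCA stationarity equation.** Let `S ∈ ℝ^{d×d}` be symmetric, `σ > 0`,
`U ∈ ℝ^{d×p}` with orthonormal columns (`UᵀU = I_p`), `Δ = diag(δ)` with `δ_j ≥ σ²`,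
`L = diag(l)` with `l_j² = δ_j - σ²`, `R ∈ ℝ^{p×p}` orthogonal, and suppose
`S U = U Δ` (the columns of `U` are eigenvectors of `S` with eigenvalues `δ_j`).
Then `Λ := U L Rᵀ = U(Δ - σ²I)^{1/2}Rᵀ` satisfies the stationarity equation of the
PPCA log-likelihood: `S (ΛΛᵀ + σ²I_d)⁻¹ Λ = Λ`. -/
theorem ppca_stationarity {d p : ℕ} (S : Matrix (Fin d) (Fin d) ℝ) (hS : S.IsSymm)
    (σ : ℝ) (hσ : 0 < σ)
    (U : Matrix (Fin d) (Fin p) ℝ) (hU : Uᵀ * U = 1)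
    (δ : Fin p → ℝ) (hδ : ∀ j, σ ^ 2 ≤ δ j)
    (l : Fin p → ℝ) (hl : ∀ j, l j ^ 2 = δ j - σ ^ 2)
    (R : Matrix (Fin p) (Fin p) ℝ) (hR : Rᵀ * R = 1)
    (hSU : S * U = U * Matrix.diagonal δ)
    (Λ : Matrix (Fin d) (Fin p) ℝ) (hΛ : Λ = U * Matrix.diagonal l * Rᵀ) :
    S * (Λ * Λᵀ + σ ^ 2 • (1 : Matrix (Fin d) (Fin d) ℝ))⁻¹ * Λ = Λ := by
  have hσ2 : 0 < σ ^ 2 := by positivity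
  have hM : IsUnit (Λ * Λᵀ + σ ^ 2 • (1 : Matrix (Fin d) (Fin d) ℝ)).det := by
    have h1 : (Λ * Λᵀ).PosSemidef := by
      simpa using Matrix.posSemidef_self_mul_conjTranspose Λ
    have h2 : (σ ^ 2 • (1 : Matrix (Fin d) (Fin d) ℝ)).PosDef := Matrix.PosDef.one.smul hσ2
    exact (Matrix.isUnit_iff_isUnit_det _).mp (Matrix.PosDef.posSemidef_add h1 h2).isUnit
  have hΔ : Matrix.diagonal δ * Matrix.diagonal (fun j => (δ j)⁻¹) = 1 := by
    rw [Matrix.diagonal_mul_diagonal, ← Matrix.diagonal_one]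
    congr 1
    funext j
    exact mul_inv_cancel₀ (hσ2.trans_le (hδ j)).ne'
  have hΛΛ : Λ * Λᵀ = U * Matrix.diagonal (fun j => δ j - σ ^ 2) * Uᵀ := by
    have hL : Matrix.diagonal l * Matrix.diagonal l
        = Matrix.diagonal (fun j => δ j - σ ^ 2) := by
      rw [Matrix.diagonal_mul_diagonal]
      congr 1
      funext j
      rw [← hl j, sq]
    calc Λ * Λᵀ = U * (Matrix.diagonal l * (Rᵀ * R) * Matrix.diagonal l) * Uᵀ := by
          simp only [hΛ, Matrix.transpose_mul, Matrix.transpose_transpose,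
            Matrix.diagonal_transpose, Matrix.mul_assoc]
      _ = _ := by rw [hR, Matrix.mul_one, hL]
  have hMU : (Λ * Λᵀ + σ ^ 2 • (1 : Matrix (Fin d) (Fin d) ℝ)) * U = U * Matrix.diagonal δ := by
    rw [hΛΛ, Matrix.add_mul, Matrix.mul_assoc, hU, Matrix.mul_one, Matrix.smul_mul, Matrix.one_mul]
    ext i j
    simp only [Matrix.add_apply, Matrix.smul_apply, Matrix.mul_diagonal, smul_eq_mul]
    ring
  generalize Λ * Λᵀ + σ ^ 2 • (1 : Matrix (Fin d) (Fin d) ℝ) = M at hM hMU ⊢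
  have hinv : M⁻¹ * U = U * Matrix.diagonal (fun j => (δ j)⁻¹) := by
    calc M⁻¹ * U = M⁻¹ * (U * Matrix.diagonal δ * Matrix.diagonal (fun j => (δ j)⁻¹)) := by
          rw [Matrix.mul_assoc, hΔ, Matrix.mul_one]
      _ = _ := by
          rw [← hMU, Matrix.mul_assoc, Matrix.nonsing_inv_mul_cancel_left _ _ hM]
  have hSMU : S * M⁻¹ * U = U := by
    rw [Matrix.mul_assoc, hinv, ← Matrix.mul_assoc, hSU, Matrix.mul_assoc, hΔ, Matrix.mul_one]
  rw [hΛ, ← Matrix.mul_assoc, ← Matrix.mul_assoc, hSMU]
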